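/- arXiv:1902.05604 — 2 statements merged into one kernel-verified Lean document; each statement's English description precedes it below -/
import Mathlib

section
/- Let Var be a finite set and D a countably infinite set. Every histogram H (over Var × D) of order q can be written as a finite sum H = Σ_{k=1}^m c_k·P_{π_k}, where each c_k is a positive rational, Σ_{k=1}^m c_k = q, each π_k : Var → D is an injective mode whose image is contained in col(H), and P_{π_k} is the permutation matrix of π_k. -/
open Finset

noncomputable section
open scoped Classical

/-- An unordered data Petri net over places `P`, transitions `T`, variables `V`,
with countably infinite data domain `D = ℕ`.
`pre p t` is the function `F(p,t) : V → ℕ` and `post t p` is `F(t,p) : V → ℕ`. -/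
structure UDPN (P T V : Type) where
  pre : P → T → V → ℕ
  post : T → P → V → ℕ

/-- An X-step `(c, t, π)`: coefficient, transition and mode. -/
structure Step (T V : Type) where
  c : ℚ
  t : T
  π : V → ℕ

variable {P T V : Type} [Fintype P] [Fintype T] [Fintype V]

/-- The `P × V` rational matrix `F(•,t)`. -/
def preMat (N : UDPN P T V) (t : T) (p : P) (x : V) : ℚ := (N.pre p t x : ℚ)

/-- The displacement `Δ(t) = F(t,•) − F(•,t)` as a `P × V` rational matrix. -/
def delta (N : UDPN P T V) (t : T) (p : P) (x : V) : ℚ :=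
  (N.post t p x : ℚ) - (N.pre p t x : ℚ)

/-- `A ∘ π⁻¹`: the `P × ℕ` matrix with `(A∘π⁻¹)(p,α) = A(p,x)` if `α = π x`,
and `0` if `α` is outside the range of `π`. (For injective `π` the sum has at
most one nonzero summand.) -/
def compInv (A : P → V → ℚ) (π : V → ℕ) (p : P) (α : ℕ) : ℚ :=
  ∑ x : V, if π x = α then A p x else 0

/-- Only finitely many nonzero columns. -/
def FinCols (m : P → ℕ → ℚ) : Prop := {α : ℕ | ∃ p, m p α ≠ 0}.Finite

/-- `IsMarking pos m`: `m` is an X-marking; `pos = true` corresponds to `X = ℚ⁺`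
(all entries nonnegative), `pos = false` to `X = ℚ`. -/
def IsMarking (pos : Bool) (m : P → ℕ → ℚ) : Prop :=
  FinCols m ∧ (pos = true → ∀ p α, 0 ≤ m p α)

/-- Data values of a marking. -/
def dvalM (m : P → ℕ → ℚ) : Set ℕ := {α | ∃ p, m p α ≠ 0}

/-- A valid X-step: nonnegative coefficient and injective mode.  -/
def IsStep (s : Step T V) : Prop := 0 ≤ s.c ∧ Function.Injective s.π

/-- A valid X-run: a finite sequence of X-steps. -/
def IsRun (ρ : List (Step T V)) : Prop := ∀ s ∈ ρ, IsStep s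

/-- The effect `c · (Δ(t) ∘ π⁻¹)` of a step. -/
def stepEffect (N : UDPN P T V) (s : Step T V) (p : P) (α : ℕ) : ℚ :=
  s.c * compInv (delta N s.t) s.π p α

/-- The effect `Δ(ρ)` of a run. -/
def runEffect (N : UDPN P T V) (ρ : List (Step T V)) (p : P) (α : ℕ) : ℚ :=
  (ρ.map fun s => stepEffect N s p α).sum

/-- A step `(c,t,π)` is fireable at `m` if `m − c·(F(•,t)∘π⁻¹)` is again an
X-marking: finitely many nonzero columns and (when `pos`) nonnegative entries. -/
def stepFireable (pos : Bool) (N : UDPN P T V) (m : P → ℕ → ℚ) (s : Step T V) : Prop :=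
  FinCols (fun p α => m p α - s.c * compInv (preMat N s.t) s.π p α) ∧
  (pos = true → ∀ p α, 0 ≤ m p α - s.c * compInv (preMat N s.t) s.π p α)

/-- A run is fireable at `m` if each step is fireable at the corresponding
intermediate marking. -/
def runFireable (pos : Bool) (N : UDPN P T V) : (P → ℕ → ℚ) → List (Step T V) → Prop
  | _, [] => True
  | m, s :: ρ => stepFireable pos N m s ∧
      runFireable pos N (fun p α => m p α + stepEffect N s p α) ρ

/-- `m →ρ_X m'` : `ρ` is fireable at `m` and `m' = m + Δ(ρ)`. -/
def Reaches (pos : Bool) (N : UDPN P T V) (i : P → ℕ → ℚ) (ρ : List (Step T V))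
    (f : P → ℕ → ℚ) : Prop :=
  runFireable pos N i ρ ∧ f = fun p α => i p α + runEffect N ρ p α

/-- `f` is X-reachable from `i`. -/
def Reach (pos : Bool) (N : UDPN P T V) (i f : P → ℕ → ℚ) : Prop :=
  ∃ ρ, IsRun ρ ∧ Reaches pos N i ρ f

/-- `vars(t)`. -/
def varsOf (N : UDPN P T V) (t : T) : Set V :=
  {x | ∃ p, N.pre p t x ≠ 0 ∨ N.post t p x ≠ 0}

/-- `maxvars(N) = max_{t ∈ T} |vars(t)|` (0 if `T` is empty). -/
def maxvars (N : UDPN P T V) : ℕ :=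
  Finset.univ.sup fun t : T => (varsOf N t).ncard

/-- `dval(ρ)`: the data values used by a run. -/
def runDval (N : UDPN P T V) (ρ : List (Step T V)) : Set ℕ :=
  {α | ∃ s ∈ ρ, ∃ x ∈ varsOf N s.t, s.π x = α}
/-- For `α ∈ E`: the least element of `{β ∈ E | β > α}` if nonempty, else `min E`. -/
def nextE (E : Finset ℕ) (α : ℕ) : ℕ :=
  if h : (E.filter fun β => α < β).Nonempty then (E.filter fun β => α < β).min' h
  else if h' : E.Nonempty then E.min' h' else 0

/-- The inverse of `nextE` on `E`: the greatest element of `{γ ∈ E | γ < β}` if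
nonempty, else `max E`. -/
def prevE (E : Finset ℕ) (β : ℕ) : ℕ :=
  if h : (E.filter fun γ => γ < β).Nonempty then (E.filter fun γ => γ < β).max' h
  else if h' : E.Nonempty then E.max' h' else 0

/-- The mode `π'` of `rot(E,ω)`, characterized by: the permutation matrix `P'` of
`π'` satisfies `P'(•,α) = P(•,α)` for `α ∉ E` and `P'(•,α) = P(•, nextE α)` for
`α ∈ E` (i.e. `π' x = α ↔ π x = nextE α` for `α ∈ E`). -/
def rotMode {V : Type} (E : Finset ℕ) (π : V → ℕ) (x : V) : ℕ :=
  if π x ∈ E then prevE E (π x) else π x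

/-- `rot(E,ω)`. -/
def rotStep (E : Finset ℕ) (s : Step T V) : Step T V := ⟨s.c, s.t, rotMode E s.π⟩

/-- The uniformization `U(E,ω)`: the concatenation
`rot^0(E, ω/|E|) ⋯ rot^{|E|−1}(E, ω/|E|)`. -/
def uniformize (E : Finset ℕ) (s : Step T V) : List (Step T V) :=
  (List.range E.card).map fun k => (rotStep E)^[k] ⟨s.c / (E.card : ℚ), s.t, s.π⟩

/-- Column `α` of `Δ(t)·P_π` is zero. -/
def zeroCol (N : UDPN P T V) (s : Step T V) (α : ℕ) : Prop :=
  ∀ p, compInv (delta N s.t) s.π p α = 0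

/-- The transposition of the data values `α` and `β`. -/
def swapVal (α β γ : ℕ) : ℕ := if γ = α then β else if γ = β then α else γ

/-- `R(α,E,ω)`: if column `α` of `Δ(t)·P_π` is zero then `ω` itself; otherwise the
step whose permutation matrix is obtained from `P_π` by exchanging columns `α` and
`β`, where `β` is the least datum in `E` whose column of `Δ(t)·P_π` is zero. -/
def replaceStep (N : UDPN P T V) (α : ℕ) (E : Finset ℕ) (s : Step T V) : Step T V :=
  if zeroCol N s α then s
  else if h : (E.filter fun β => zeroCol N s β).Nonempty then
    ⟨s.c, s.t, fun x => swapVal α ((E.filter fun β => zeroCol N s β).min' h) (s.π x)⟩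
  else s

/-- `dec(E,α,σ)`: the concatenation `U(E,R(α,E,σ(1))) ⋯ U(E,R(α,E,σ(n)))`. -/
def decRun (N : UDPN P T V) (α : ℕ) (E : Finset ℕ) (σ : List (Step T V)) :
    List (Step T V) :=
  σ.flatMap fun s => uniformize E (replaceStep N α E s)

/-- A histogram of order `q`: a `V × ℕ` matrix with nonnegative rational entries
and finitely many nonzero columns, every row summing to `q` and every column
summing to at most `q`. -/
def IsHistogram (H : V → ℕ → ℚ) (q : ℚ) : Prop :=
  0 ≤ q ∧ (∀ x α, 0 ≤ H x α) ∧ ({α | ∃ x, H x α ≠ 0}).Finite ∧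
  (∀ x, ∑ᶠ α, H x α = q) ∧ (∀ α, ∑ x : V, H x α ≤ q)

/-- `col(H)`: the nonzero columns of `H`. -/
def colH (H : V → ℕ → ℚ) : Set ℕ := {α | ∃ x, H x α ≠ 0}

/-- The permutation matrix `P_π` of a mode `π`. -/
def permMat {V : Type} (π : V → ℕ) (x : V) (α : ℕ) : ℚ := if π x = α then 1 else 0

/-- `Pre(ρ)`: pairs `(p,α)` of tokens consumed by the run `ρ`. -/
def preSet (N : UDPN P T V) (ρ : List (Step T V)) : Set (P × ℕ) :=
  {pa | ∃ s ∈ ρ, ∃ x, 0 < N.pre pa.1 s.t x ∧ s.π x = pa.2}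

/-- `Post(ρ)`: pairs `(p,α)` of tokens produced by the run `ρ`. -/
def postSet (N : UDPN P T V) (ρ : List (Step T V)) : Set (P × ℕ) :=
  {pa | ∃ s ∈ ρ, ∃ x, 0 < N.post s.t pa.1 x ∧ s.π x = pa.2}

/-- A loop-less UDPN: `PrePlace(t) ∩ PostPlace(t) = ∅` for every transition. -/
def IsLoopless (N : UDPN P T V) : Prop :=
  ∀ t : T, ¬ ∃ p : P, (∃ x, 0 < N.pre p t x) ∧ (∃ x, 0 < N.post t p x)

/-!
A matrix `A` with row sums `q` and column sums at most `q` is completed to a symmetric square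
matrix `[0, A; Aᵀ, E]`, where the diagonal block `E` holds what the columns of `A` lack to reach
`q`. All row and column sums are now `q`, so Birkhoff's theorem writes the completion as a
nonnegative combination of permutation matrices. No permutation of positive weight meets the zero
block, so each sends rows of `A` injectively to columns of `A`.
-/

section WeightedSums

variable {R ι : Type*} [NonUnitalNonAssocSemiring R] [PartialOrder R] [Fintype ι]

theorem exists_fin_pos_sum_mul_eq {w : ι → R} (hw : ∀ i, 0 ≤ w i) :
    ∃ (m : ℕ) (e : Fin m → ι), (∀ k, 0 < w (e k)) ∧
      ∀ f : ι → R, ∑ k, w (e k) * f (e k) = ∑ i, w i * f i := by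
  let e := (Fintype.equivFin {i // 0 < w i}).symm
  refine ⟨_, fun k => e k, fun k => (e k).2, fun f => ?_⟩
  have hpos : ∀ i ∈ univ, w i * f i ≠ 0 → 0 < w i := fun i _ hi =>
    (hw i).lt_of_ne' (left_ne_zero_of_mul hi)
  calc ∑ k, w (e k) * f (e k)
      = ∑ i : {i // 0 < w i}, w i * f i := e.sum_comp fun i => w i * f i
    _ = ∑ i with 0 < w i, w i * f i :=
      (sum_subtype _ (fun _ => mem_filter_univ _) fun i => w i * f i).symm
    _ = ∑ i, w i * f i := sum_filter_of_ne hpos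

end WeightedSums

section SquareCompletion

variable {R ι κ : Type*} [Fintype ι] [DecidableEq κ]

/-- The symmetric square matrix `[0, A; Aᵀ, E]` completing a rectangular matrix `A`, where `E` is
the diagonal matrix of the column deficits `q - ∑ x, A x a`. It reduces matrices whose column sums
are only bounded by `q` to multiples of doubly stochastic ones. -/
def squareCompletion [AddCommGroup R] (A : Matrix ι κ R) (q : R) : Matrix (ι ⊕ κ) (ι ⊕ κ) R :=
  Matrix.fromBlocks 0 A A.transpose (Matrix.diagonal fun a => q - ∑ x, A x a)

theorem squareCompletion_isSymm [AddCommGroup R] (A : Matrix ι κ R) (q : R) :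
    (squareCompletion A q).IsSymm :=
  Matrix.isSymm_zero.fromBlocks rfl (Matrix.isSymm_diagonal _)

theorem sum_squareCompletion_row [AddCommGroup R] [Fintype κ] {A : Matrix ι κ R} {q : R}
    (hrow : ∀ x, ∑ a, A x a = q) (i : ι ⊕ κ) : ∑ j, squareCompletion A q i j = q := by
  rcases i with x | a <;> simp [squareCompletion, hrow, Matrix.diagonal_apply]

theorem squareCompletion_nonneg [AddCommGroup R] [PartialOrder R] [IsOrderedAddMonoid R]
    {A : Matrix ι κ R} {q : R} (hA : ∀ x a, 0 ≤ A x a) (hcol : ∀ a, ∑ x, A x a ≤ q)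
    (i j : ι ⊕ κ) : 0 ≤ squareCompletion A q i j := by
  rcases i with x | a <;> rcases j with y | b
  · exact le_rfl
  · exact hA x b
  · exact hA y a
  · simp only [squareCompletion, Matrix.fromBlocks_apply₂₂, Matrix.diagonal_apply]
    split_ifs
    exacts [sub_nonneg.2 (hcol a), le_rfl]

end SquareCompletion

section Birkhoff

variable {R ι κ : Type*} [Field R] [LinearOrder R] [IsStrictOrderedRing R] [Fintype ι]

theorem exists_eq_sum_perm_of_sum_row_col_eq [DecidableEq ι] {M : Matrix ι ι R} {s : R}
    (hs : 0 ≤ s) (hM : ∀ i j, 0 ≤ M i j) (hrow : ∀ i, ∑ j, M i j = s)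
    (hcol : ∀ j, ∑ i, M i j = s) :
    ∃ w : Equiv.Perm ι → R, (∀ σ, 0 ≤ w σ) ∧ ∑ σ, w σ = s ∧
      ∑ σ, w σ • σ.permMatrix R = M := by
  obtain ⟨M', hM', rfl⟩ := (exists_mem_doublyStochastic_eq_smul_iff hs).2 ⟨hM, hrow, hcol⟩
  obtain ⟨w, hw, hsum, rfl⟩ := exists_eq_sum_perm_of_mem_doublyStochastic hM'
  refine ⟨fun σ => s * w σ, fun σ => mul_nonneg hs (hw σ), ?_, ?_⟩
  · rw [← mul_sum, hsum, mul_one]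
  · simp only [smul_sum, mul_smul]

theorem exists_eq_sum_pos_perm_of_sum_row_col_eq [DecidableEq ι] {M : Matrix ι ι R} {s : R}
    (hs : 0 ≤ s) (hM : ∀ i j, 0 ≤ M i j) (hrow : ∀ i, ∑ j, M i j = s)
    (hcol : ∀ j, ∑ i, M i j = s) :
    ∃ (m : ℕ) (c : Fin m → R) (σ : Fin m → Equiv.Perm ι),
      (∀ k, 0 < c k) ∧ ∑ k, c k = s ∧
      ∀ i j, M i j = ∑ k, c k * if σ k i = j then 1 else 0 := by
  obtain ⟨w, hw, hsum, rfl⟩ := exists_eq_sum_perm_of_sum_row_col_eq hs hM hrow hcol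
  obtain ⟨m, σ, hpos, hσ⟩ := exists_fin_pos_sum_mul_eq hw
  refine ⟨m, fun k => w (σ k), σ, hpos, ?_, fun i j => ?_⟩
  · simpa [hsum] using hσ fun _ => 1
  · rw [hσ fun τ => if τ i = j then 1 else 0]
    simp [Matrix.sum_apply, Equiv.toPEquiv_apply]

theorem exists_eq_sum_injective_of_sum_row_eq_of_sum_col_le [Fintype κ] [DecidableEq κ]
    {A : Matrix ι κ R} {q : R} (hq : 0 ≤ q) (hA : ∀ x a, 0 ≤ A x a)
    (hrow : ∀ x, ∑ a, A x a = q) (hcol : ∀ a, ∑ x, A x a ≤ q) :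
    ∃ (m : ℕ) (c : Fin m → R) (π : Fin m → ι → κ),
      (∀ k, 0 < c k) ∧ ∑ k, c k = q ∧ (∀ k, Function.Injective (π k)) ∧
      ∀ x a, A x a = ∑ k, c k * if π k x = a then 1 else 0 := by
  have hsum := sum_squareCompletion_row hrow
  obtain ⟨m, c, σ, hc, hcq, hσ⟩ := exists_eq_sum_pos_perm_of_sum_row_col_eq hq
    (squareCompletion_nonneg hA hcol) hsum fun j => by
      simpa only [(squareCompletion_isSymm A q).apply] using hsum j
  have σ_inl_ne_inl : ∀ k x y, σ k (Sum.inl x) ≠ Sum.inl y := by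
    intro k x y hk
    have hzero : ∑ l, c l * (if σ l (Sum.inl x) = Sum.inl y then 1 else 0) = 0 :=
      (hσ _ _).symm
    have hterm := (sum_eq_zero_iff_of_nonneg fun l _ =>
      mul_nonneg (hc l).le (by split_ifs <;> simp)).1 hzero k (mem_univ k)
    simp [hk, (hc k).ne'] at hterm
  have exists_inr : ∀ k x, ∃ a, σ k (Sum.inl x) = Sum.inr a := by
    intro k x
    rcases h : σ k (Sum.inl x) with y | a
    exacts [(σ_inl_ne_inl k x y h).elim, ⟨a, rfl⟩]
  choose π hπ using exists_inr
  refine ⟨m, c, π, hc, hcq, fun k x y hxy => ?_, fun x a => ?_⟩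
  · exact Sum.inl_injective ((σ k).injective (by rw [hπ, hπ, hxy]))
  · simpa [squareCompletion, hπ] using hσ (Sum.inl x) (Sum.inr a)

end Birkhoff

theorem histogram_perm_decomposition_general {R ι D : Type*} [Field R] [LinearOrder R]
    [IsStrictOrderedRing R] [Fintype ι] [DecidableEq D] (H : ι → D → R) {q : R} (hq : 0 ≤ q)
    (hH : ∀ x α, 0 ≤ H x α) (hfin : {α | ∃ x, H x α ≠ 0}.Finite)
    (hrow : ∀ x, ∑ᶠ α, H x α = q) (hcol : ∀ α, ∑ x, H x α ≤ q) :
    ∃ (m : ℕ) (c : Fin m → R) (π : Fin m → ι → D),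
      (∀ k, 0 < c k) ∧ ∑ k, c k = q ∧
      (∀ k, Function.Injective (π k)) ∧
      (∀ k x, π k x ∈ {α | ∃ y, H y α ≠ 0}) ∧
      H = fun x α => ∑ k, c k * if π k x = α then 1 else 0 := by
  set S := {α | ∃ x, H x α ≠ 0}
  have : Fintype S := hfin.fintype
  have hrowS : ∀ x, ∑ a : S, H x a = q := by
    intro x
    have hsupp : Function.support (H x) ⊆ S := fun α hα => ⟨x, hα⟩
    rw [← hrow x, ← finsum_eq_sum_of_fintype, finsum_set_coe_eq_finsum_mem S, finsum_mem_def,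
      Set.indicator_eq_self.2 hsupp]
  obtain ⟨m, c, π, hc, hcq, hinj, hdecomp⟩ :=
    exists_eq_sum_injective_of_sum_row_eq_of_sum_col_le (A := fun x (a : S) => H x a) hq
      (fun x a => hH x a) hrowS fun a => hcol a
  refine ⟨m, c, fun k x => π k x, hc, hcq, fun k => Subtype.val_injective.comp (hinj k),
    fun k x => (π k x).2, ?_⟩
  funext x α
  by_cases hα : α ∈ S
  · simpa only [Subtype.ext_iff] using hdecomp x ⟨α, hα⟩
  · have hπ : ∀ k, (π k x : D) ≠ α := fun k h => hα (h ▸ (π k x).2)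
    have hzero : H x α = 0 := by_contra fun h => hα ⟨x, h⟩
    simp [hπ, hzero]

/-- Every histogram of order `q` is a finite sum
`Σ_k c_k · P_{π_k}` with `c_k > 0`, `Σ_k c_k = q`, each `π_k` an injective mode
with image contained in `col(H)`. -/
theorem histogram_perm_decomposition
    (H : V → ℕ → ℚ) (q : ℚ) (hH : IsHistogram H q) :
    ∃ (m : ℕ) (c : Fin m → ℚ) (π : Fin m → V → ℕ),
      (∀ k, 0 < c k) ∧ (∑ k, c k) = q ∧
      (∀ k, Function.Injective (π k)) ∧
      (∀ k x, π k x ∈ colH H) ∧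
      H = fun x α => ∑ k, c k * permMat (π k) x α := by
  obtain ⟨hq, hnonneg, hfin, hrow, hcol⟩ := hH
  exact histogram_perm_decomposition_general H hq hnonneg hfin hrow hcol
end
end

section
/- Let N = (P,T,F,Var) be a UDPN and i, f ℚ⁺-markings. Suppose there exists a ℚ-run σ with i →σ_ℚ f such that i(p,α) > 0 for every (p,α) ∈ Pre(σ) and f(p,α) > 0 for every (p,α) ∈ Post(σ). Then f is ℚ⁺-reachable from i. -/
open Finset

noncomputable section
open scoped Classical

variable {P T V : Type} [Fintype P] [Fintype T] [Fintype V]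

/-! Scaling every coefficient of `σ` by `ε = 1 / n` and firing the scaled run `n` times moves the
marking along the segment from `i` to `f`, visiting the points `i + t Δ(σ)` with `t = k / n`. A run
is `ℚ⁺`-fireable as soon as the marking covers its total consumption, so it suffices that
`ε c ≤ i + t Δ(σ)` for every `t ∈ [0, 1 - ε]`, where `c` and `g` are the consumption and the
production of `σ`. This inequality is affine in `t`, and since `Δ(σ) = g - c` its two endpoint cases
read `ε c ≤ i` and `ε g ≤ f`. Both hold for large `n`, because `c` and `g` are finitely supported in
`Pre(σ)` and `Post(σ)`, where `i` and `f` are positive. -/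

lemma le_add_mul_of_le_of_le_add_mul {𝕜 : Type*} [Ring 𝕜] [LinearOrder 𝕜] [IsOrderedRing 𝕜]
    {a b d t u : 𝕜} (ha : a ≤ b) (hu : a ≤ b + u * d) (ht : 0 ≤ t) (htu : t ≤ u) :
    a ≤ b + t * d := by
  rcases le_total 0 d with hd | hd
  · exact ha.trans (le_add_of_nonneg_right (mul_nonneg ht hd))
  · exact hu.trans (add_le_add le_rfl (mul_le_mul_of_nonpos_right htu hd))

lemma eventually_inv_mul_le {ι 𝕜 : Type*} [Field 𝕜] [LinearOrder 𝕜] [IsStrictOrderedRing 𝕜]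
    [Archimedean 𝕜] {c m : ι → 𝕜} (hc : (Function.support c).Finite) (hm : 0 ≤ m)
    (hpos : ∀ a, c a ≠ 0 → 0 < m a) :
    ∀ᶠ n : ℕ in Filter.atTop, ∀ a, (n : 𝕜)⁻¹ * c a ≤ m a := by
  have hsupp : ∀ᶠ n : ℕ in Filter.atTop, ∀ a ∈ Function.support c, (n : 𝕜)⁻¹ * c a ≤ m a := by
    refine (Filter.eventually_all_finite hc).2 fun a ha => ?_
    filter_upwards [tendsto_natCast_atTop_atTop.eventually_ge_atTop (c a / m a),
      Filter.eventually_gt_atTop 0] with n hn hn0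
    rw [inv_mul_le_iff₀ (Nat.cast_pos.2 hn0), ← div_le_iff₀ (hpos a ha)]
    exact hn
  filter_upwards [hsupp] with n hn a
  by_cases ha : c a = 0
  · simpa [ha] using hm a
  · exact hn a ha

section

variable {P T V : Type}

lemma FinCols.add {m m' : P → ℕ → ℚ} (hm : FinCols m) (hm' : FinCols m') :
    FinCols (m + m') := by
  refine (hm.union hm').subset ?_
  rintro α ⟨p, hp⟩
  by_cases h : m p α = 0
  · exact Or.inr ⟨p, by simpa [h] using hp⟩
  · exact Or.inl ⟨p, h⟩

lemma FinCols.const_smul {m : P → ℕ → ℚ} (hm : FinCols m) (q : ℚ) : FinCols (q • m) :=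
  hm.subset fun _ ⟨p, hp⟩ => ⟨p, right_ne_zero_of_mul hp⟩

lemma FinCols.finite_support [Finite P] {m : P → ℕ → ℚ} (hm : FinCols m) :
    (Function.support fun a : P × ℕ => m a.1 a.2).Finite :=
  (Set.finite_univ.prod hm).subset fun a ha => ⟨trivial, a.1, ha⟩

lemma isRun_cons {s : Step T V} {ρ : List (Step T V)} :
    IsRun (s :: ρ) ↔ IsStep s ∧ IsRun ρ :=
  List.forall_mem_cons

lemma isRun_append {ρ ρ' : List (Step T V)} : IsRun (ρ ++ ρ') ↔ IsRun ρ ∧ IsRun ρ' :=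
  List.forall_mem_append

/-- The run `q · ρ`, in which every coefficient of `ρ` is multiplied by `q`. -/
def scaleRun (q : ℚ) (ρ : List (Step T V)) : List (Step T V) :=
  ρ.map fun s => ⟨q * s.c, s.t, s.π⟩

lemma IsRun.scaleRun {ρ : List (Step T V)} (hρ : IsRun ρ) {q : ℚ} (hq : 0 ≤ q) :
    IsRun (scaleRun q ρ) :=
  List.forall_mem_map.2 fun s hs => ⟨mul_nonneg hq (hρ s hs).1, (hρ s hs).2⟩

/-- The `P × V` rational matrix `F(t,•)`, the counterpart of `preMat`. -/
def postMat (N : UDPN P T V) (t : T) (p : P) (x : V) : ℚ := (N.post t p x : ℚ)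

lemma preMat_nonneg (N : UDPN P T V) : 0 ≤ preMat N :=
  fun _ _ _ => Nat.cast_nonneg _

lemma postMat_nonneg (N : UDPN P T V) : 0 ≤ postMat N :=
  fun _ _ _ => Nat.cast_nonneg _

lemma preMat_add_delta (N : UDPN P T V) : preMat N + delta N = postMat N := by
  ext t p x
  simp [preMat, delta, postMat]

variable [Fintype V]

lemma compInv_nonneg {A : P → V → ℚ} (hA : 0 ≤ A) (π : V → ℕ) : 0 ≤ compInv A π :=
  fun p _ => sum_nonneg fun x _ => ite_nonneg (hA p x) le_rfl

lemma compInv_add (A B : P → V → ℚ) (π : V → ℕ) :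
    compInv (A + B) π = compInv A π + compInv B π := by
  ext p α
  simp only [compInv, Pi.add_apply, ← sum_add_distrib, ite_add_zero]

lemma exists_of_compInv_ne_zero {A : P → V → ℚ} {π : V → ℕ} {p : P} {α : ℕ}
    (h : compInv A π p α ≠ 0) : ∃ x, A p x ≠ 0 ∧ π x = α := by
  obtain ⟨x, -, hx⟩ := exists_ne_zero_of_sum_ne_zero h
  obtain ⟨hπ, hx⟩ := ite_ne_right_iff.1 hx
  exact ⟨x, hx, hπ⟩

lemma finCols_compInv (A : P → V → ℚ) (π : V → ℕ) : FinCols (compInv A π) := by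
  refine (Set.finite_range π).subset ?_
  rintro α ⟨p, hp⟩
  obtain ⟨x, -, hx⟩ := exists_of_compInv_ne_zero hp
  exact ⟨x, hx⟩

/-- The total flow `∑ c · (A(t) ∘ π⁻¹)` over the steps `(c,t,π)` of a run, for a family `A` of
`P × V` matrices indexed by transitions. Taking `A = preMat N` gives the total consumption of the
run, `A = postMat N` its total production, and `A = delta N` its effect. -/
def runFlow (A : T → P → V → ℚ) (ρ : List (Step T V)) (p : P) (α : ℕ) : ℚ :=
  (ρ.map fun s => s.c * compInv (A s.t) s.π p α).sum

lemma runEffect_eq_runFlow (N : UDPN P T V) : runEffect N = runFlow (delta N) :=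
  rfl

lemma runFlow_nil (A : T → P → V → ℚ) : runFlow A [] = 0 :=
  rfl

lemma runFlow_cons (A : T → P → V → ℚ) (s : Step T V) (ρ : List (Step T V)) :
    runFlow A (s :: ρ) = s.c • compInv (A s.t) s.π + runFlow A ρ := by
  ext p α
  simp [runFlow]

lemma runFlow_append (A : T → P → V → ℚ) (ρ ρ' : List (Step T V)) :
    runFlow A (ρ ++ ρ') = runFlow A ρ + runFlow A ρ' := by
  ext p α
  simp [runFlow]

lemma runFlow_scaleRun (A : T → P → V → ℚ) (q : ℚ) (ρ : List (Step T V)) :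
    runFlow A (scaleRun q ρ) = q • runFlow A ρ := by
  ext p α
  simp [runFlow, scaleRun, Function.comp_def, mul_assoc, List.sum_map_mul_left]

lemma runFlow_add (A B : T → P → V → ℚ) (ρ : List (Step T V)) :
    runFlow (A + B) ρ = runFlow A ρ + runFlow B ρ := by
  ext p α
  simp [runFlow, compInv_add, mul_add, List.sum_map_add]

lemma runFlow_nonneg {A : T → P → V → ℚ} (hA : 0 ≤ A) {ρ : List (Step T V)} (hρ : IsRun ρ) :
    0 ≤ runFlow A ρ := fun p α =>
  List.sum_nonneg <| List.forall_mem_map.2 fun s hs =>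
    mul_nonneg (hρ s hs).1 (compInv_nonneg (hA s.t) s.π p α)

lemma exists_of_runFlow_ne_zero {A : T → P → V → ℚ} {ρ : List (Step T V)} {p : P} {α : ℕ}
    (h : runFlow A ρ p α ≠ 0) : ∃ s ∈ ρ, ∃ x, A s.t p x ≠ 0 ∧ s.π x = α := by
  obtain ⟨_, hmem, hne⟩ := List.exists_mem_ne_zero_of_sum_ne_zero h
  obtain ⟨s, hs, rfl⟩ := List.mem_map.1 hmem
  exact ⟨s, hs, exists_of_compInv_ne_zero (right_ne_zero_of_mul hne)⟩

lemma finCols_runFlow (A : T → P → V → ℚ) (ρ : List (Step T V)) : FinCols (runFlow A ρ) := by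
  induction ρ with
  | nil => simp [runFlow_nil, FinCols]
  | cons s ρ ih =>
    rw [runFlow_cons]
    exact ((finCols_compInv (A s.t) s.π).const_smul s.c).add ih

lemma mem_preSet_of_runFlow_preMat_ne_zero {N : UDPN P T V} {ρ : List (Step T V)} {p : P} {α : ℕ}
    (h : runFlow (preMat N) ρ p α ≠ 0) : (p, α) ∈ preSet N ρ := by
  obtain ⟨s, hs, x, hx, hπ⟩ := exists_of_runFlow_ne_zero h
  exact ⟨s, hs, x, Nat.pos_of_ne_zero (Nat.cast_ne_zero.1 hx), hπ⟩

lemma mem_postSet_of_runFlow_postMat_ne_zero {N : UDPN P T V} {ρ : List (Step T V)} {p : P} {α : ℕ}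
    (h : runFlow (postMat N) ρ p α ≠ 0) : (p, α) ∈ postSet N ρ := by
  obtain ⟨s, hs, x, hx, hπ⟩ := exists_of_runFlow_ne_zero h
  exact ⟨s, hs, x, Nat.pos_of_ne_zero (Nat.cast_ne_zero.1 hx), hπ⟩

lemma runFlow_preMat_add_runEffect (N : UDPN P T V) (ρ : List (Step T V)) :
    runFlow (preMat N) ρ + runEffect N ρ = runFlow (postMat N) ρ := by
  rw [runEffect_eq_runFlow, ← runFlow_add, preMat_add_delta]

lemma runFireable_append {pos : Bool} {N : UDPN P T V} {ρ ρ' : List (Step T V)}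
    {m : P → ℕ → ℚ} (h : runFireable pos N m ρ)
    (h' : runFireable pos N (m + runEffect N ρ) ρ') : runFireable pos N m (ρ ++ ρ') := by
  induction ρ generalizing m with
  | nil => simpa [runEffect_eq_runFlow, runFlow_nil] using h'
  | cons s ρ ih =>
    refine ⟨h.1, ih h.2 ?_⟩
    rw [runEffect_eq_runFlow, runFlow_cons, ← add_assoc] at h'
    exact h'

lemma Reach.refl (pos : Bool) (N : UDPN P T V) (m : P → ℕ → ℚ) : Reach pos N m m :=
  ⟨[], List.forall_mem_nil _, trivial, (add_zero m).symm⟩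

lemma Reach.trans {pos : Bool} {N : UDPN P T V} {m₁ m₂ m₃ : P → ℕ → ℚ}
    (h₁₂ : Reach pos N m₁ m₂) (h₂₃ : Reach pos N m₂ m₃) : Reach pos N m₁ m₃ := by
  obtain ⟨ρ, hρ, hfire, rfl⟩ := h₁₂
  obtain ⟨ρ', hρ', hfire', rfl⟩ := h₂₃
  refine ⟨ρ ++ ρ', isRun_append.2 ⟨hρ, hρ'⟩, runFireable_append hfire hfire', ?_⟩
  exact (add_assoc m₁ _ _).trans (congrArg (m₁ + ·) (runFlow_append (delta N) ρ ρ').symm)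

lemma stepFireable_of_le {pos : Bool} {N : UDPN P T V} {s : Step T V} {m : P → ℕ → ℚ}
    (hm : FinCols m) (h : s.c • compInv (preMat N s.t) s.π ≤ m) : stepFireable pos N m s := by
  refine ⟨?_, fun _ p α => sub_nonneg.2 (h p α)⟩
  convert hm.add ((finCols_compInv (preMat N s.t) s.π).const_smul (-s.c)) using 1
  ext p α
  simp [sub_eq_add_neg]

lemma stepEffect_add_smul_preMat_nonneg (N : UDPN P T V) {s : Step T V} (hs : IsStep s) :
    0 ≤ stepEffect N s + s.c • compInv (preMat N s.t) s.π := by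
  have hpost : compInv (delta N s.t) s.π + compInv (preMat N s.t) s.π =
      compInv (postMat N s.t) s.π := by
    rw [← compInv_add, add_comm, ← preMat_add_delta, Pi.add_apply]
  calc (0 : P → ℕ → ℚ) ≤ s.c • compInv (postMat N s.t) s.π :=
        smul_nonneg hs.1 (compInv_nonneg (postMat_nonneg N s.t) s.π)
    _ = stepEffect N s + s.c • compInv (preMat N s.t) s.π := by rw [← hpost, smul_add]; rfl

lemma runFireable_of_runFlow_preMat_le {pos : Bool} {N : UDPN P T V} {ρ : List (Step T V)}
    (hρ : IsRun ρ) {m : P → ℕ → ℚ} (hm : FinCols m) (h : runFlow (preMat N) ρ ≤ m) :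
    runFireable pos N m ρ := by
  induction ρ generalizing m with
  | nil => trivial
  | cons s ρ ih =>
    obtain ⟨hs, hρ⟩ := isRun_cons.1 hρ
    rw [runFlow_cons] at h
    have hfire : s.c • compInv (preMat N s.t) s.π ≤ m :=
      le_of_add_le_of_nonneg_left h (runFlow_nonneg (preMat_nonneg N) hρ)
    have hm' : FinCols (m + stepEffect N s) :=
      hm.add ((finCols_compInv (delta N s.t) s.π).const_smul s.c)
    have hρm' : runFlow (preMat N) ρ ≤ m + stepEffect N s :=
      calc runFlow (preMat N) ρ ≤ m - s.c • compInv (preMat N s.t) s.π := le_sub_iff_add_le'.2 h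
        _ ≤ m + stepEffect N s := by
          rw [sub_le_iff_le_add, add_assoc]
          exact le_add_of_nonneg_right (stepEffect_add_smul_preMat_nonneg N hs)
    exact ⟨stepFireable_of_le hm hfire, ih hρ hm' hρm'⟩

lemma reach_add_runEffect {pos : Bool} {N : UDPN P T V} {ρ : List (Step T V)} (hρ : IsRun ρ)
    {m : P → ℕ → ℚ} (hm : FinCols m) (h : runFlow (preMat N) ρ ≤ m) :
    Reach pos N m (m + runEffect N ρ) :=
  ⟨ρ, hρ, runFireable_of_runFlow_preMat_le hρ hm h, rfl⟩

lemma smul_runFlow_preMat_le_add_smul_runEffect {N : UDPN P T V} {ρ : List (Step T V)}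
    {m : P → ℕ → ℚ} {ε t : ℚ} (hpre : ε • runFlow (preMat N) ρ ≤ m)
    (hpost : ε • runFlow (postMat N) ρ ≤ m + runEffect N ρ) (ht : 0 ≤ t) (htε : t ≤ 1 - ε) :
    ε • runFlow (preMat N) ρ ≤ m + t • runEffect N ρ := by
  have hlast : ε • runFlow (preMat N) ρ ≤ m + (1 - ε) • runEffect N ρ := by
    rw [sub_smul, one_smul, ← add_sub_assoc, le_sub_iff_add_le, ← smul_add,
      runFlow_preMat_add_runEffect]
    exact hpost
  exact fun p α => le_add_mul_of_le_of_le_add_mul (hpre p α) (hlast p α) ht htε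

lemma reach_add_smul_runEffect {pos : Bool} {N : UDPN P T V} {ρ : List (Step T V)} (hρ : IsRun ρ)
    {m : P → ℕ → ℚ} (hm : FinCols m) {ε : ℚ} (hε : 0 ≤ ε)
    (hpre : ε • runFlow (preMat N) ρ ≤ m)
    (hpost : ε • runFlow (postMat N) ρ ≤ m + runEffect N ρ) {n : ℕ} (hn : n * ε ≤ 1) :
    Reach pos N m (m + (n * ε) • runEffect N ρ) := by
  induction n with
  | zero => simpa using Reach.refl pos N m
  | succ n ih =>
    push_cast [add_one_mul] at hn ⊢
    have hcover := smul_runFlow_preMat_le_add_smul_runEffect hpre hpost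
      (mul_nonneg n.cast_nonneg hε) (le_sub_right_of_add_le hn)
    rw [← runFlow_scaleRun] at hcover
    have hcols := hm.add ((finCols_runFlow (delta N) ρ).const_smul (n * ε))
    have hstep := reach_add_runEffect (pos := pos) (hρ.scaleRun hε) hcols hcover
    rw [runEffect_eq_runFlow, runFlow_scaleRun, add_assoc, ← add_smul] at hstep
    exact (ih (by linarith)).trans hstep

lemma eventually_inv_smul_runFlow_le [Finite P] (A : T → P → V → ℚ) (ρ : List (Step T V))
    {m : P → ℕ → ℚ} (hm : 0 ≤ m) (hpos : ∀ p α, runFlow A ρ p α ≠ 0 → 0 < m p α) :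
    ∀ᶠ n : ℕ in Filter.atTop, (n : ℚ)⁻¹ • runFlow A ρ ≤ m := by
  filter_upwards [eventually_inv_mul_le (finCols_runFlow A ρ).finite_support
    (fun a => hm a.1 a.2) fun a => hpos a.1 a.2] with n hn p α
  exact hn (p, α)

theorem q_run_gives_qplus_reach_general [Finite P] (N : UDPN P T V) {i f : P → ℕ → ℚ}
    (hi : IsMarking true i) (hf : 0 ≤ f) {σ : List (Step T V)} (hσ : IsRun σ)
    (hif : f = i + runEffect N σ) (hpre : ∀ pa ∈ preSet N σ, 0 < i pa.1 pa.2)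
    (hpost : ∀ pa ∈ postSet N σ, 0 < f pa.1 pa.2) :
    Reach true N i f := by
  have hcons : ∀ᶠ n : ℕ in Filter.atTop, (n : ℚ)⁻¹ • runFlow (preMat N) σ ≤ i :=
    eventually_inv_smul_runFlow_le _ σ (hi.2 rfl) fun _ _ h =>
      hpre _ (mem_preSet_of_runFlow_preMat_ne_zero h)
  have hprod : ∀ᶠ n : ℕ in Filter.atTop, (n : ℚ)⁻¹ • runFlow (postMat N) σ ≤ f :=
    eventually_inv_smul_runFlow_le _ σ hf fun _ _ h =>
      hpost _ (mem_postSet_of_runFlow_postMat_ne_zero h)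
  obtain ⟨n, hnpre, hnpost, hn⟩ :=
    (hcons.and (hprod.and (Filter.eventually_ne_atTop 0))).exists
  have hn1 : (n : ℚ) * (n : ℚ)⁻¹ = 1 := mul_inv_cancel₀ (Nat.cast_ne_zero.2 hn)
  subst hif
  simpa [hn1] using reach_add_smul_runEffect (pos := true) hσ hi.1
    (inv_nonneg.2 n.cast_nonneg) hnpre hnpost hn1.le

end

/-- If there is a ℚ-run `σ` with `i →σ_ℚ f` where `i` is
positive on `Pre(σ)` and `f` is positive on `Post(σ)`, then `f` is ℚ⁺-reachable
from `i`. -/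
theorem q_run_gives_qplus_reach
    (N : UDPN P T V) (i f : P → ℕ → ℚ)
    (hi : IsMarking true i) (hf : IsMarking true f)
    (σ : List (Step T V)) (hσ : IsRun σ) (hσr : Reaches false N i σ f)
    (hpre : ∀ pa ∈ preSet N σ, 0 < i pa.1 pa.2)
    (hpost : ∀ pa ∈ postSet N σ, 0 < f pa.1 pa.2) :
    Reach true N i f :=
  q_run_gives_qplus_reach_general N hi (hf.2 rfl) hσ hσr.2 hpre hpost
end
end
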